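/- arXiv:math/0408343 — 2 statements merged into one kernel-verified Lean document; each statement's English description precedes it below -/
import Mathlib

section
/- Let M be a connected matroid of rank r ≥ 2 on n elements with no loops, and let b_i(M) denote the coefficients of T(M;x,0) = Σ_i b_i x^i, where T is the Tutte polynomial. Then for all 1 ≤ i ≤ r, b_i(M) ≤ C(r-2, i-1)·b_1(M) + C(r-2, i-2). -/
/-!
Write `p_M = T(M; x, 0)`. If `e` is a fixed non-loop of `M`, pairing each set `A ∌ e` with `A ∪ e`
shows `p_M = x * q_M`, where `q_M` is a sum over the sets `A` whose closure avoids `e`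
(`pp_eq_X_mul_qq`); the constant coefficient of `q_M` is the beta invariant `β(M)`. For a connected
loopless matroid of rank `s + 1` the claim is the coefficientwise bound
`q_M ≤ (1 + x)^(s - 1) * (β(M) + x)`, together with `1 ≤ β(M)`; in rank one, `q_M = 1`. This is the
predicate `Good s q`. It is proved by induction on the number of elements (`main_bound`), splitting
on connectedness of `M / e` and `M \ e` for an arbitrary element `e`.

* If `M / e` is disconnected, then `M` is a parallel connection at `e` of connected matroids `M₁`
  and `M₂`, and `q_M = q_{M₁} * q_{M₂}` (`qq_parallel`). The bound is multiplicative (`Good.mul`)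
  because `(1 + x)(ab + x) - (a + x)(b + x) = (a - 1)(b - 1) x`.
* If `M / e` and `M \ e` are both connected, then `p_M = p_{M \ e} + p_{M / e}` and the two bounds
  add up because `β(M / e) ≥ 1` (`Good.add`).
* If `M / e` is connected and `M \ e` is the direct sum of its restrictions to `A` and `B`, then `M`
  is the series connection at `e` of the connected matroids `M / B` and `M / A`. Here
  `p_{M \ e} = p_{M | A} * p_{M | B}`, and `p_{M | A} ≤ p_{M / B}` since `M | A = (M / B) \ e`.
  Moreover `β(M) = β(M / B) * β(M / A)` (`qq_series_coeff_zero`), since `e` lies in the closure of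
  `Y ∪ Z` exactly when it lies in the closure of `Y` in `M / B` and in that of `Z` in `M / A`. As
  `p_{M \ e}` is divisible by `x²`, also `β(M) = β(M / e)`, and `Good.series` combines the bounds.

All minors are handled through rank functions on finsets of one fixed type: deletion shrinks the
ground set and contraction changes the rank function.
-/

open Polynomial

variable {α : Type*}

/-- The rank of a set `A` in a matroid `M`: the largest cardinality of an independent
subset of `A`. -/
noncomputable def mr (M : Matroid α) (A : Set α) : ℕ :=
  sSup {n | ∃ I, M.Indep I ∧ I ⊆ A ∧ I.ncard = n}

/-- `mf M j` is the number of independent sets of `M` of cardinality `j`, i.e. the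
number of faces of cardinality `j` of the independence complex of `M`. -/
noncomputable def mf (M : Matroid α) (j : ℕ) : ℕ :=
  {I : Set α | M.Indep I ∧ I.ncard = j}.ncard

/-- The `h`-vector of the independence complex of a rank-`r` matroid `M`:
`h_i = ∑_{j=0}^i (-1)^{i-j} C(r-j, r-i) f_j`. -/
noncomputable def mh (M : Matroid α) (r i : ℕ) : ℤ :=
  ∑ j ∈ Finset.range (i + 1), (-1 : ℤ) ^ (i - j) * ((r - j).choose (r - i) : ℤ) * (mf M j : ℤ)

/-- Binomial coefficient `C(a,b)` for integers, with the convention that it is `0`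
whenever `b < 0` or `b > a`. -/
def ch (a b : ℤ) : ℤ := if 0 ≤ b ∧ b ≤ a then (a.toNat.choose b.toNat : ℤ) else 0

/-- `e` is a loop of `M`. -/
def mLoop (M : Matroid α) (e : α) : Prop := e ∈ M.closure ∅

/-- `e` is a coloop of `M`, i.e. a loop of the dual matroid. -/
def mColoop (M : Matroid α) (e : α) : Prop := e ∈ M✶.closure ∅

/-- `M` is connected: it is not the direct sum of two smaller matroids; equivalently,
`r(A) + r(E \ A) ≠ r(E)` for every proper nonempty subset `A` of the ground set. -/
def mConnected (M : Matroid α) : Prop :=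
  M.E.Nonempty ∧ ∀ A ⊆ M.E, A.Nonempty → (M.E \ A).Nonempty →
    mr M A + mr M (M.E \ A) ≠ mr M M.E

/-- The deletion `M - D`. -/
noncomputable def mdel (M : Matroid α) (D : Set α) : Matroid α := M.restrict (M.E \ D)

/-- The contraction `M / C`, defined as the dual of the deletion of `C` in the dual. -/
noncomputable def mcon (M : Matroid α) (C : Set α) : Matroid α := (mdel M✶ C)✶

/-- `P` is a parallel class of `M`: the set of all non-loop elements parallel to some
fixed non-loop element `e`. -/
def mParClass (M : Matroid α) (P : Set α) : Prop :=
  ∃ e ∈ M.E, ¬ mLoop M e ∧ P = {f | f ∈ M.E ∧ ¬ mLoop M f ∧ f ∈ M.closure {e}}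

/-- `S` is a series class of `M`: a parallel class of the dual matroid. -/
def mSerClass (M : Matroid α) (S : Set α) : Prop := mParClass M✶ S

/-- `T(M; x, 0)`: the Tutte polynomial of `M` (with ground set the whole fintype)
evaluated at `y = 0`, so that `T(M;x,0) = ∑_i b_i(M) x^i`. -/
noncomputable def bpoly [Fintype α] [DecidableEq α] (M : Matroid α) : Polynomial ℤ :=
  ∑ A : Finset α,
    (X - 1) ^ (mr M Set.univ - mr M (A : Set α)) *
      C ((-1 : ℤ) ^ (A.card - mr M (A : Set α)))

/-- Two elements of the ground set lie in the same connected component iff no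
separator (a set `A` with `r(A) + r(E \ A) = r(E)`) splits them. -/
def crel (M : Matroid α) (e f : α) : Prop :=
  e ∈ M.E ∧ f ∈ M.E ∧
    ∀ A ⊆ M.E, mr M A + mr M (M.E \ A) = mr M M.E → (e ∈ A ↔ f ∈ A)

/-- The number of connected components of `M`. -/
noncomputable def numComponents (M : Matroid α) : ℕ :=
  {S : Set α | ∃ e ∈ M.E, S = {f | crel M e f}}.ncard

/-! ### Rank functions and their minors -/

section RankFunctions

variable [DecidableEq α]

/-- `r` satisfies the axioms of a matroid rank function, on all finsets of the ambient type; the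
ground set is supplied separately. -/
structure IsRk (r : Finset α → ℕ) : Prop where
  empty : r ∅ = 0
  mono : ∀ {A B : Finset α}, A ⊆ B → r A ≤ r B
  insert_le : ∀ (e : α) (A : Finset α), r (insert e A) ≤ r A + 1
  submod : ∀ A B : Finset α, r (A ∪ B) + r (A ∩ B) ≤ r A + r B

/-- The rank function of the contraction by `S`. It is a difference of natural numbers, which is
exact for a monotone `r`. -/
def con (r : Finset α → ℕ) (S : Finset α) : Finset α → ℕ := fun A => r (S ∪ A) - r S

/-- Connectedness of the matroid with ground set `E` and rank function `r`. -/
def Conn (E : Finset α) (r : Finset α → ℕ) : Prop :=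
  ∀ A B : Finset α, A ∪ B = E → Disjoint A B → A.Nonempty → B.Nonempty → r A + r B ≠ r E

/-- `T(M; x, 0)` for the matroid with ground set `E` and rank function `r`. The sign has exponent
`|A| + r A`, of the same parity as the nullity `|A| - r A`. -/
noncomputable def pp (E : Finset α) (r : Finset α → ℕ) : ℤ[X] :=
  ∑ A ∈ E.powerset, (X - 1) ^ (r E - r A) * (-1) ^ (A.card + r A)

/-- The quotient `T(M; x, 0) / x` for the matroid on `D ∪ {e}`, written as a sum over the sets
`A ⊆ D` whose closure does not contain `e`. -/
noncomputable def qq (D : Finset α) (e : α) (r : Finset α → ℕ) : ℤ[X] :=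
  ∑ A ∈ D.powerset, if r (insert e A) = r A then 0 else
    (X - 1) ^ (r (insert e D) - 1 - r A) * (-1) ^ (A.card + r A)

namespace IsRk

variable {r : Finset α → ℕ} (hr : IsRk r)
include hr

lemma con_isRk (S : Finset α) : IsRk (con r S) where
  empty := by simp [con]
  mono h := Nat.sub_le_sub_right (hr.mono (Finset.union_subset_union_right h)) _
  insert_le e A := by
    have h := hr.insert_le e (S ∪ A)
    have h2 := hr.mono (Finset.subset_union_left : S ⊆ S ∪ A)
    simp only [con, Finset.union_insert]
    omega
  submod A B := by
    have h := hr.submod (S ∪ A) (S ∪ B)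
    rw [← Finset.union_union_distrib_left, ← Finset.union_inter_distrib_left] at h
    have h1 := hr.mono (Finset.subset_union_left : S ⊆ S ∪ A)
    have h2 := hr.mono (Finset.subset_union_left : S ⊆ S ∪ B)
    have h3 := hr.mono (Finset.subset_union_left : S ⊆ S ∪ (A ∩ B))
    have h4 := hr.mono (Finset.subset_union_left : S ⊆ S ∪ (A ∪ B))
    simp only [con]
    omega

lemma union_le (A B : Finset α) : r (A ∪ B) ≤ r A + r B := by
  have := hr.submod A B
  omega

/-- If `A`, `B` are skew, so are all their subsets. -/
lemma sep_split {A B Y Z : Finset α} (hd : Disjoint A B) (h : r A + r B = r (A ∪ B))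
    (hY : Y ⊆ A) (hZ : Z ⊆ B) : r (Y ∪ Z) = r Y + r Z := by
  rw [Finset.disjoint_left] at hd
  have h1 := hr.submod (A ∪ Z) B
  have h2 := hr.submod (Y ∪ Z) A
  have e1 : A ∪ Z ∪ B = A ∪ B := by grind
  have e2 : (A ∪ Z) ∩ B = Z := by grind
  have e3 : Y ∪ Z ∪ A = A ∪ Z := by grind
  have e4 : (Y ∪ Z) ∩ A = Y := by grind
  rw [e1, e2] at h1
  rw [e3, e4] at h2
  have h3 := hr.union_le Y Z
  omega

lemma one_le_insert {e : α} (he : r {e} = 1) (A : Finset α) : 1 ≤ r (insert e A) := by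
  rw [← he]
  exact hr.mono (by simp)

end IsRk

lemma con_singleton {r : Finset α → ℕ} {e : α} (he : r {e} = 1) (A : Finset α) :
    con r {e} A = r (insert e A) - 1 := by
  rw [con, he, ← Finset.insert_eq]

/-! ### Direct sums, deletion-contraction and division by `x` -/

lemma sum_powerset_union {R : Type*} [AddCommMonoid R] {A B : Finset α} (hd : Disjoint A B)
    (f : Finset α → R) :
    ∑ S ∈ (A ∪ B).powerset, f S = ∑ Y ∈ A.powerset, ∑ Z ∈ B.powerset, f (Y ∪ Z) := by
  rw [← Finset.sum_product']
  rw [Finset.disjoint_left] at hd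
  refine Finset.sum_nbij' (fun S => (S ∩ A, S ∩ B)) (fun P => P.1 ∪ P.2) ?_ ?_ ?_ ?_ ?_
  · intro S hS
    simp
  · rintro ⟨Y, Z⟩ h
    simp only [Finset.mem_product, Finset.mem_powerset] at h ⊢
    exact Finset.union_subset_union h.1 h.2
  · intro S hS
    rw [Finset.mem_powerset] at hS
    grind
  · rintro ⟨Y, Z⟩ h
    simp only [Finset.mem_product, Finset.mem_powerset] at h
    ext x <;> grind
  · intro S hS
    rw [Finset.mem_powerset] at hS
    congr 1
    grind

/-- Multiplicativity on direct sums. -/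
lemma pp_sep {r : Finset α → ℕ} (hr : IsRk r) {A B : Finset α} (hd : Disjoint A B)
    (h : r A + r B = r (A ∪ B)) : pp (A ∪ B) r = pp A r * pp B r := by
  unfold pp
  rw [sum_powerset_union hd, Finset.sum_mul_sum]
  refine Finset.sum_congr rfl fun Y hY => Finset.sum_congr rfl fun Z hZ => ?_
  rw [Finset.mem_powerset] at hY hZ
  rw [Finset.card_union_of_disjoint (Finset.disjoint_of_subset_left hY
    (Finset.disjoint_of_subset_right hZ hd)), hr.sep_split hd h hY hZ, ← h]
  have h1 := hr.mono hY
  have h2 := hr.mono hZ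
  rw [show r A + r B - (r Y + r Z) = (r A - r Y) + (r B - r Z) by omega]
  ring

/-- Deletion-contraction for an element `e` that is neither a loop nor a coloop. -/
lemma pp_del_con {r : Finset α → ℕ} (hr : IsRk r) {D : Finset α} {e : α} (heD : e ∉ D)
    (he : r {e} = 1) (h : r (insert e D) = r D) :
    pp (insert e D) r = pp D r + pp D (con r {e}) := by
  unfold pp
  rw [Finset.sum_powerset_insert heD, h]
  congr 1
  refine Finset.sum_congr rfl fun A hA => ?_
  rw [Finset.mem_powerset] at hA
  rw [con_singleton he, con_singleton he, h, Finset.card_insert_of_notMem (fun h => heD (hA h))]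
  obtain ⟨k, hk⟩ := Nat.exists_eq_add_of_le' (hr.one_le_insert he A)
  rw [hk, show r D - 1 - (k + 1 - 1) = r D - (k + 1) by omega, Nat.add_sub_cancel]
  ring

/-- No assumption on `e` is needed: if `e` is a loop, both sides vanish. -/
lemma pp_eq_X_mul_qq {r : Finset α → ℕ} (hr : IsRk r) {D : Finset α} {e : α} (heD : e ∉ D) :
    pp (insert e D) r = X * qq D e r := by
  unfold pp qq
  rw [Finset.sum_powerset_insert heD, ← Finset.sum_add_distrib, Finset.mul_sum]
  refine Finset.sum_congr rfl fun A hA => ?_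
  rw [Finset.mem_powerset] at hA
  rw [Finset.card_insert_of_notMem (fun h => heD (hA h))]
  have h1 := hr.insert_le e A
  have h2 := hr.mono (Finset.subset_insert e A)
  have h3 := hr.mono (Finset.insert_subset_insert e hA)
  split_ifs with h
  · rw [h]
    ring
  · have h4 : r (insert e A) = r A + 1 := by omega
    rw [h4]
    obtain ⟨k, hk⟩ : ∃ k, r (insert e D) = r A + 1 + k :=
      ⟨r (insert e D) - (r A + 1), by omega⟩
    rw [hk, show r A + 1 + k - r A = k + 1 by omega, show r A + 1 + k - (r A + 1) = k by omega,
      show r A + 1 + k - 1 - r A = k by omega]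
    ring

/-! ### Coefficientwise nonnegativity -/

/-- All coefficients of `P` are nonnegative; `NN (Q - P)` is the coefficientwise order. -/
def NN (P : ℤ[X]) : Prop := ∀ i, 0 ≤ P.coeff i

omit [DecidableEq α] in
lemma NN.add {P Q : ℤ[X]} (hP : NN P) (hQ : NN Q) : NN (P + Q) := fun i => by
  rw [coeff_add]
  exact add_nonneg (hP i) (hQ i)

lemma NN.mul {P Q : ℤ[X]} (hP : NN P) (hQ : NN Q) : NN (P * Q) := fun i => by
  rw [coeff_mul]
  exact Finset.sum_nonneg fun _ _ => mul_nonneg (hP _) (hQ _)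

lemma NN_C {a : ℤ} (ha : 0 ≤ a) : NN (C a) := fun i => by
  rw [coeff_C]
  split_ifs <;> simp [ha]

lemma NN_one : NN 1 := NN_C zero_le_one

lemma NN_zero : NN 0 := fun i => by simp

lemma NN_X : NN X := fun i => by
  rw [coeff_X]
  split_ifs <;> simp

lemma NN.pow {P : ℤ[X]} (hP : NN P) (n : ℕ) : NN (P ^ n) := by
  induction n with
  | zero => simpa using NN_one
  | succ n ih => rw [pow_succ]; exact ih.mul hP

lemma NN.of_X_mul {P : ℤ[X]} (hP : NN (X * P)) : NN P := fun i => by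
  simpa using hP (i + 1)

lemma NN_pp (E : Finset α) : ∀ {r : Finset α → ℕ}, IsRk r → NN (pp E r) := by
  induction E using Finset.induction_on with
  | empty =>
    intro r hr
    simpa [pp, hr.empty] using NN_one
  | insert e D heD ih =>
    intro r hr
    have h1 := hr.insert_le e ∅
    have hs : insert e (∅ : Finset α) = {e} := rfl
    rw [hr.empty, hs] at h1
    rcases Nat.lt_or_ge (r {e}) 1 with h0 | h0
    -- a loop, then an ordinary element, then a coloop
    · rw [pp_eq_X_mul_qq hr heD]
      have : qq D e r = 0 := by
        refine Finset.sum_eq_zero fun A hA => ?_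
        rw [if_pos]
        have h2 := hr.union_le {e} A
        have h3 := hr.mono (Finset.subset_insert e A)
        rw [← Finset.insert_eq] at h2
        omega
      rw [this, mul_zero]
      exact NN_zero
    · have h1 : r {e} = 1 := by omega
      by_cases h : r (insert e D) = r D
      · rw [pp_del_con hr heD h1 h]
        exact (ih hr).add (ih (hr.con_isRk _))
      · have h2 := hr.insert_le e D
        have h3 := hr.mono (Finset.subset_insert e D)
        have h4 : r {e} + r D = r ({e} ∪ D) := by
          rw [← Finset.insert_eq]
          omega
        rw [Finset.insert_eq, pp_sep hr (by simpa using heD) h4]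
        have : pp {e} r = X := by
          have := Finset.sum_powerset_insert (Finset.notMem_empty e)
            (fun A => ((X : ℤ[X]) - 1) ^ (r {e} - r A) * (-1) ^ (A.card + r A))
          rw [hs] at this
          unfold pp
          rw [this]
          simp [hr.empty, h1]
        rw [this]
        exact NN_X.mul (ih hr)

/-! ### The bound and its behaviour under the three reductions -/

/-- The bound for `T(M; x, 0) / x` when `M` has rank `s + 1` and beta invariant `b`. In rank one
(`s = 0`) it is the exact value `1`. -/
noncomputable def bd : ℕ → ℤ → ℤ[X]
  | 0, _ => 1
  | k + 1, b => (1 + X) ^ k * (C b + X)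

/-- The polynomial `q`, standing for `T(M; x, 0) / x` with `M` of rank `s + 1` and beta invariant
`q.coeff 0`, has nonnegative coefficients, positive beta invariant, and satisfies the bound. -/
structure Good (s : ℕ) (q : ℤ[X]) : Prop where
  nn : NN q
  one_le : 1 ≤ q.coeff 0
  le : NN (bd s (q.coeff 0) - q)

lemma NN_bd (s : ℕ) {b : ℤ} (hb : 0 ≤ b) : NN (bd s b) := by
  cases s with
  | zero => exact NN_one
  | succ k => exact ((NN_one.add NN_X).pow k).mul ((NN_C hb).add NN_X)

lemma Good.coeff_zero {q : ℤ[X]} (h : Good 0 q) : q.coeff 0 = 1 := by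
  have h1 := h.le 0
  have h2 := h.one_le
  simp [bd] at h1
  omega

lemma NN.mul_sub_mul {P Q P' Q' : ℤ[X]} (hP : NN P) (hQ' : NN Q')
    (h : NN (P' - P)) (h' : NN (Q' - Q)) : NN (P' * Q' - P * Q) := by
  have : P' * Q' - P * Q = (P' - P) * Q' + P * (Q' - Q) := by ring
  rw [this]
  exact (h.mul hQ').add (hP.mul h')

lemma NN_bd_mul {s t : ℕ} {a b : ℤ} (ha : 1 ≤ a) (hb : 1 ≤ b) (hs : s = 0 → a = 1)
    (ht : t = 0 → b = 1) : NN (bd (s + t) (a * b) - bd s a * bd t b) := by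
  rcases s with _ | s
  · simp [hs rfl, bd, NN_zero]
  rcases t with _ | t
  · simp [ht rfl, bd, NN_zero]
  have : bd (s + 1 + (t + 1)) (a * b) - bd (s + 1) a * bd (t + 1) b =
      (1 + X) ^ (s + t) * (C ((a - 1) * (b - 1)) * X) := by
    rw [show s + 1 + (t + 1) = (s + t + 1) + 1 by ring]
    simp only [bd, C_mul, C_sub, C_1]
    ring
  rw [this]
  exact ((NN_one.add NN_X).pow _).mul
    ((NN_C (mul_nonneg (by omega) (by omega))).mul NN_X)

/-- The bound for parallel connections, whose ranks minus one add. -/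
lemma Good.mul {s t : ℕ} {P Q : ℤ[X]} (hP : Good s P) (hQ : Good t Q) :
    Good (s + t) (P * Q) where
  nn := hP.nn.mul hQ.nn
  one_le := by
    rw [mul_coeff_zero]
    nlinarith [hP.one_le, hQ.one_le]
  le := by
    rw [mul_coeff_zero]
    have h1 := NN_bd_mul (s := s) (t := t) hP.one_le hQ.one_le
      (by rintro rfl; exact hP.coeff_zero) (by rintro rfl; exact hQ.coeff_zero)
    have h2 := hP.nn.mul_sub_mul (NN_bd t (zero_le_one.trans hQ.one_le)) hP.le hQ.le
    simpa using h1.add h2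

/-- The bound for `M` from `P = q_{M \ e}` and `Q = q_{M / e}`. -/
lemma Good.add {s : ℕ} {P Q : ℤ[X]} (hP : Good (s + 1) P) (hQ : Good s Q) :
    Good (s + 1) (P + Q) where
  nn := hP.nn.add hQ.nn
  one_le := by
    rw [coeff_add]
    linarith [hP.one_le, hQ.one_le]
  le := by
    rw [coeff_add]
    have h1 : NN (bd (s + 1) (P.coeff 0 + Q.coeff 0) - bd (s + 1) (P.coeff 0)
        - bd s (Q.coeff 0)) := by
      rcases s with _ | s
      · simp [bd, hQ.coeff_zero, NN_zero]
      · have : bd (s + 1 + 1) (P.coeff 0 + Q.coeff 0) - bd (s + 1 + 1) (P.coeff 0)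
            - bd (s + 1) (Q.coeff 0) = (1 + X) ^ s * (C (Q.coeff 0 - 1) * X) := by
          simp only [bd, C_add, C_sub, C_1]
          ring
        rw [this]
        exact ((NN_one.add NN_X).pow _).mul
          ((NN_C (sub_nonneg.2 hQ.one_le)).mul NN_X)
    have := (h1.add hP.le).add hQ.le
    convert this using 1
    ring

/-- The bound for series connections: `P = q_{M / e}`, `R = p_{M \ e} / x`, and `Q` is the product
of the polynomials `q` of the two parts. -/
lemma Good.series {s : ℕ} {P Q R : ℤ[X]} (hP : Good s P) (hQ : Good s Q)
    (h0 : P.coeff 0 = Q.coeff 0) (hR : NN R) (hRQ : NN (X * Q - R)) (hR0 : R.coeff 0 = 0) :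
    Good (s + 1) (R + P) where
  nn := hR.add hP.nn
  one_le := by simpa [hR0] using hP.one_le
  le := by
    have h1 : bd (s + 1) (P.coeff 0) = X * bd s (Q.coeff 0) + bd s (P.coeff 0) := by
      rcases s with _ | s
      · simp [bd, hP.coeff_zero, add_comm]
      · simp only [bd, ← h0]
        ring
    rw [coeff_add, hR0, zero_add, h1]
    convert ((NN_X.mul hQ.le).add hP.le).add hRQ using 1
    ring

/-! ### Parallel and series connections -/

/-- The beta invariant as a signed count of the sets `A ⊆ D` whose closure contains `e`. -/
lemma qq_coeff_zero {r : Finset α → ℕ} (hr : IsRk r) {D : Finset α} {e : α}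
    (hD : D.Nonempty) :
    (qq D e r).coeff 0 = (-1) ^ r (insert e D) *
      ∑ A ∈ D.powerset, if r (insert e A) = r A then (-1 : ℤ) ^ A.card else 0 := by
  have h0 : ∑ A ∈ D.powerset, (-1 : ℤ) ^ A.card = 0 :=
    Finset.sum_powerset_neg_one_pow_card_of_nonempty hD
  have h1 : (∑ A ∈ D.powerset, if r (insert e A) = r A then (-1 : ℤ) ^ A.card else 0) =
      ∑ A ∈ D.powerset, ((if r (insert e A) = r A then (-1 : ℤ) ^ A.card else 0) -
        (-1) ^ A.card) := by
    rw [Finset.sum_sub_distrib, h0, sub_zero]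
  rw [h1, Finset.mul_sum, qq, finsetSum_coeff]
  refine Finset.sum_congr rfl fun A hA => ?_
  rw [Finset.mem_powerset] at hA
  have h1 := hr.insert_le e A
  have h2 := hr.mono (Finset.subset_insert e A)
  have h3 := hr.mono (Finset.insert_subset_insert e hA)
  split_ifs with h
  · simp
  · obtain ⟨k, hk⟩ : ∃ k, r (insert e D) = r A + 1 + k :=
      ⟨r (insert e D) - (r A + 1), by omega⟩
    rw [hk, show r A + 1 + k - 1 - r A = k by omega]
    simp only [coeff_zero_eq_eval_zero, eval_mul, eval_pow, eval_sub, eval_X,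
      eval_one, eval_neg]
    ring

/-- If `A` and `B` are skew in `M / e`, then the closure of `Y ∪ Z` (with `Y ⊆ A`, `Z ⊆ B`) avoids `e`
exactly when those of `Y` and `Z` do, and then `r (Y ∪ Z) = r Y + r Z`. -/
lemma qq_parallel {r : Finset α → ℕ} (hr : IsRk r) {A B : Finset α} {e : α}
    (hd : Disjoint A B) (he : r {e} = 1)
    (h : r (insert e A) + r (insert e B) = r (insert e (A ∪ B)) + 1) :
    qq (A ∪ B) e r = qq A e r * qq B e r := by
  unfold qq
  rw [sum_powerset_union hd, Finset.sum_mul_sum]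
  refine Finset.sum_congr rfl fun Y hY => Finset.sum_congr rfl fun Z hZ => ?_
  rw [Finset.mem_powerset] at hY hZ
  rw [Finset.card_union_of_disjoint (Finset.disjoint_of_subset_left hY
    (Finset.disjoint_of_subset_right hZ hd))]
  have hs := (hr.con_isRk {e}).sep_split hd (by
    simp only [con_singleton he]
    have := hr.one_le_insert he A
    have := hr.one_le_insert he B
    omega) hY hZ
  simp only [con_singleton he] at hs
  have a1 := hr.one_le_insert he Y
  have a2 := hr.one_le_insert he Z
  have a3 := hr.one_le_insert he (Y ∪ Z)
  have b1 := hr.insert_le e Y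
  have b2 := hr.insert_le e Z
  have b3 := hr.insert_le e (Y ∪ Z)
  have c1 := hr.mono (Finset.subset_insert e Y)
  have c2 := hr.mono (Finset.subset_insert e Z)
  have c3 := hr.mono (Finset.subset_insert e (Y ∪ Z))
  have d1 := hr.mono (Finset.insert_subset_insert e hY)
  have d2 := hr.mono (Finset.insert_subset_insert e hZ)
  have f1 := hr.union_le Y Z
  by_cases hY' : r (insert e Y) = r Y
  · have f2 := hr.union_le (insert e Y) Z
    have g := hr.submod (Y ∪ Z) (insert e Y)
    have g1 : r ((Y ∪ Z) ∪ insert e Y) = r (insert e (Y ∪ Z)) := by congr 1; grind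
    have g2 := hr.mono (show Y ⊆ (Y ∪ Z) ∩ insert e Y by grind)
    rw [if_pos (by omega), if_pos hY', zero_mul]
  by_cases hZ' : r (insert e Z) = r Z
  · have g := hr.submod (Y ∪ Z) (insert e Z)
    have g1 : r ((Y ∪ Z) ∪ insert e Z) = r (insert e (Y ∪ Z)) := by congr 1; grind
    have g2 := hr.mono (show Z ⊆ (Y ∪ Z) ∩ insert e Z by grind)
    rw [if_pos (by omega), if_pos hZ', mul_zero]
  have k : r (Y ∪ Z) = r Y + r Z := by omega
  rw [if_neg (by omega), if_neg hY', if_neg hZ', k,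
    show r (insert e (A ∪ B)) - 1 - (r Y + r Z) =
      (r (insert e A) - 1 - r Y) + (r (insert e B) - 1 - r Z) by omega]
  ring

/-- The beta invariant of a series connection is the product of those of its two parts. -/
lemma qq_series_coeff_zero {r : Finset α → ℕ} (hr : IsRk r) {A B : Finset α} {e : α}
    (hd : Disjoint A B) (hA : A.Nonempty) (hB : B.Nonempty)
    (h : r A + r B = r (A ∪ B)) (h' : r (insert e (A ∪ B)) = r (A ∪ B)) :
    (qq (A ∪ B) e r).coeff 0 = (qq A e (con r B)).coeff 0 * (qq B e (con r A)).coeff 0 := by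
  rw [qq_coeff_zero hr (hA.mono Finset.subset_union_left), qq_coeff_zero (hr.con_isRk B) hA,
    qq_coeff_zero (hr.con_isRk A) hB, sum_powerset_union hd]
  have hr1 : con r B (insert e A) = r A := by
    rw [con, Finset.union_insert, Finset.union_comm, h', ← h]; omega
  have hr2 : con r A (insert e B) = r B := by
    rw [con, Finset.union_insert, h', ← h]; omega
  rw [h', ← h, hr1, hr2, pow_add, mul_mul_mul_comm, Finset.sum_mul_sum]
  congr 1
  refine Finset.sum_congr rfl fun Y hY => Finset.sum_congr rfl fun Z hZ => ?_
  rw [Finset.mem_powerset] at hY hZ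
  rw [Finset.card_union_of_disjoint (Finset.disjoint_of_subset_left hY
    (Finset.disjoint_of_subset_right hZ hd)), pow_add]
  rw [Finset.disjoint_left] at hd
  have s1 := hr.sep_split (Finset.disjoint_left.2 hd) h hY hZ
  have s2 := hr.sep_split (Finset.disjoint_left.2 hd) h hY subset_rfl
  have s3 := hr.sep_split (Finset.disjoint_left.2 hd) h subset_rfl hZ
  have c1 := hr.mono (Finset.subset_insert e (Y ∪ Z))
  have c2 := hr.mono (Finset.subset_insert e (Y ∪ B))
  have c3 := hr.mono (Finset.subset_insert e (A ∪ Z))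
  have k1 : con r B (insert e Y) = con r B Y ↔ r (insert e (Y ∪ B)) = r (Y ∪ B) := by
    rw [con, con, Finset.union_insert, Finset.union_comm B Y]
    omega
  have k2 : con r A (insert e Z) = con r A Z ↔ r (insert e (A ∪ Z)) = r (A ∪ Z) := by
    rw [con, con, Finset.union_insert]
    omega
  -- submodularity applied to `Y ∪ B ∪ e` and `A ∪ Z ∪ e`, which meet in `Y ∪ Z ∪ e`, gives `←`
  have key : r (insert e (Y ∪ Z)) = r (Y ∪ Z) ↔
      (r (insert e (Y ∪ B)) = r (Y ∪ B) ∧ r (insert e (A ∪ Z)) = r (A ∪ Z)) := by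
    constructor
    · intro hh
      have g := hr.submod (insert e (Y ∪ Z)) (Y ∪ B)
      have g1 : r (insert e (Y ∪ Z) ∪ (Y ∪ B)) = r (insert e (Y ∪ B)) := by congr 1; grind
      have g2 := hr.mono (show Y ∪ Z ⊆ insert e (Y ∪ Z) ∩ (Y ∪ B) by grind)
      have u := hr.submod (insert e (Y ∪ Z)) (A ∪ Z)
      have u1 : r (insert e (Y ∪ Z) ∪ (A ∪ Z)) = r (insert e (A ∪ Z)) := by congr 1; grind
      have u2 := hr.mono (show Y ∪ Z ⊆ insert e (Y ∪ Z) ∩ (A ∪ Z) by grind)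
      omega
    · rintro ⟨h1, h2⟩
      have g := hr.submod (insert e (Y ∪ B)) (insert e (A ∪ Z))
      have g1 : r (insert e (Y ∪ B) ∪ insert e (A ∪ Z)) = r (insert e (A ∪ B)) := by
        congr 1; grind
      have g2 : r (insert e (Y ∪ B) ∩ insert e (A ∪ Z)) = r (insert e (Y ∪ Z)) := by
        congr 1; grind
      omega
  rw [ite_zero_mul_ite_zero]
  simp only [key, k1, k2]

/-- The parts `M | (A ∪ e)` of a parallel connection are connected: a separator of the part extends
to one of `M` by adding `B` to the side that contains `e`. -/
lemma Conn.parallel_part {r : Finset α → ℕ} (hr : IsRk r) {A B : Finset α} {e : α}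
    (heB : e ∉ B) (hd : Disjoint A B) (he : r {e} = 1)
    (h : r (insert e A) + r (insert e B) = r (insert e (A ∪ B)) + 1)
    (hc : Conn (insert e (A ∪ B)) r) : Conn (insert e A) r := by
  have key : ∀ S T, S ∪ T = insert e A → Disjoint S T → T.Nonempty → e ∈ S →
      r S + r T ≠ r (insert e A) := by
    intro S T hST hdST hT heS hh
    have hm : ∀ x, (x ∈ S ∨ x ∈ T) ↔ (x = e ∨ x ∈ A) := fun x => by
      rw [← Finset.mem_union, hST, Finset.mem_insert]
    rw [Finset.disjoint_left] at hd hdST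
    refine hc (S ∪ B) T (by grind) (Finset.disjoint_left.2 (by grind)) ⟨e, by grind⟩ hT ?_
    have g := hr.submod S (insert e B)
    have g1 : r (S ∪ insert e B) = r (S ∪ B) := by congr 1; grind
    have g2 := hr.mono (show {e} ⊆ S ∩ insert e B by grind)
    have g3 := hr.union_le (S ∪ B) T
    have g4 : r ((S ∪ B) ∪ T) = r (insert e (A ∪ B)) := by congr 1; grind
    omega
  intro S T hST hdST hS hT
  have : e ∈ S ∪ T := by rw [hST]; simp
  rcases Finset.mem_union.1 this with h1 | h1
  · exact key S T hST hdST hT h1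
  · rw [add_comm]
    exact key T S (by rwa [Finset.union_comm]) hdST.symm hS h1

/-- The parts `M / B` of a series connection are connected, for the same reason. -/
lemma Conn.series_part {r : Finset α → ℕ} (hr : IsRk r) {A B : Finset α} {e : α}
    (hd : Disjoint A B)
    (h : r A + r B = r (A ∪ B))
    (hc : Conn (insert e (A ∪ B)) r) : Conn (insert e A) (con r B) := by
  have key : ∀ S T, S ∪ T = insert e A → Disjoint S T → T.Nonempty → e ∈ S →
      con r B S + con r B T ≠ con r B (insert e A) := by
    intro S T hST hdST hT heS hh
    have hm : ∀ x, (x ∈ S ∨ x ∈ T) ↔ (x = e ∨ x ∈ A) := fun x => by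
      rw [← Finset.mem_union, hST, Finset.mem_insert]
    have hdST' := Finset.disjoint_left.1 hdST
    have hd' := Finset.disjoint_left.1 hd
    have hTA : T ⊆ A := by grind
    refine hc (B ∪ S) T (by grind) (Finset.disjoint_left.2 (by grind)) ⟨e, by grind⟩ hT ?_
    have s := hr.sep_split hd h hTA subset_rfl
    have m1 := hr.mono (show B ⊆ B ∪ S by grind)
    have m2 := hr.mono (show B ⊆ B ∪ insert e A by grind)
    have g4 : r (B ∪ insert e A) = r (insert e (A ∪ B)) := by congr 1; grind
    simp only [con] at hh
    rw [Finset.union_comm B T] at hh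
    omega
  intro S T hST hdST hS hT
  have : e ∈ S ∪ T := by rw [hST]; simp
  rcases Finset.mem_union.1 this with h1 | h1
  · exact key S T hST hdST hT h1
  · rw [add_comm]
    exact key T S (by rwa [Finset.union_comm]) hdST.symm hS h1

/-- A connected matroid of positive rank has no loops. -/
lemma Conn.rk_singleton {r : Finset α → ℕ} (hr : IsRk r) {E : Finset α} (hc : Conn E r)
    (hE : 1 ≤ r E) {e : α} (he : e ∈ E) : r {e} = 1 := by
  have h1 := hr.insert_le e ∅
  have hs : insert e (∅ : Finset α) = {e} := rfl
  rw [hr.empty, hs] at h1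
  by_contra hne
  have h0 : r {e} = 0 := by omega
  have hu : {e} ∪ E.erase e = E := by
    rw [← Finset.insert_eq, Finset.insert_erase he]
  have h2 := hr.union_le {e} (E.erase e)
  have h3 := hr.mono (Finset.erase_subset e E)
  rw [hu] at h2
  refine hc {e} (E.erase e) hu (by simp) (by simp) ?_ (by omega)
  rw [Finset.nonempty_iff_ne_empty]
  intro h4
  rw [h4, hr.empty] at h2
  omega

/-- A connected matroid of rank at least two has no coloops. -/
lemma Conn.rk_erase {r : Finset α → ℕ} (hr : IsRk r) {D : Finset α} {e : α} (heD : e ∉ D)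
    (hc : Conn (insert e D) r) (hE : 2 ≤ r (insert e D)) : r (insert e D) = r D := by
  have h1 := hc.rk_singleton hr (by omega) (Finset.mem_insert_self e D)
  have h2 := hr.insert_le e D
  have h3 := hr.mono (Finset.subset_insert e D)
  have h4 := hc {e} D rfl (by simpa using heD) (by simp) (by
    rw [Finset.nonempty_iff_ne_empty]
    intro h4
    rw [h4, hr.empty] at h2
    rw [h4] at hE
    omega)
  omega

/-! ### The induction -/

lemma X_mul_inj {P Q : ℤ[X]} (h : X * P = X * Q) : P = Q := mul_left_cancel₀ X_ne_zero h

theorem main_bound (n : ℕ) : ∀ (E : Finset α) (r : Finset α → ℕ), E.card = n → IsRk r →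
    Conn E r → 1 ≤ r E → ∃ q, pp E r = X * q ∧ Good (r E - 1) q := by
  induction n using Nat.strong_induction_on with
  | _ n ih =>
  intro E r hn hr hc hE
  have hne : E.Nonempty := by
    rw [Finset.nonempty_iff_ne_empty]
    rintro rfl
    rw [hr.empty] at hE
    omega
  obtain ⟨e, heE⟩ := hne
  obtain ⟨D, heD, rfl⟩ : ∃ D, e ∉ D ∧ insert e D = E :=
    ⟨E.erase e, by simp, Finset.insert_erase heE⟩
  have he := hc.rk_singleton hr hE heE
  rw [Finset.card_insert_of_notMem heD] at hn
  have hpq := pp_eq_X_mul_qq hr heD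
  rcases Nat.lt_or_ge (r (insert e D)) 2 with h1 | h2
  · refine ⟨_, hpq, ?_⟩
    have hE1 : r (insert e D) = 1 := by omega
    -- in rank one only the empty set has closure avoiding `e`
    have : qq D e r = 1 := by
      unfold qq
      rw [Finset.sum_eq_single_of_mem ∅ (by simp)]
      · simp [hr.empty, he, hE1]
      · intro A hA hA0
        rw [Finset.mem_powerset] at hA
        obtain ⟨f, hf⟩ := Finset.nonempty_iff_ne_empty.2 hA0
        have g1 := hc.rk_singleton hr hE (Finset.mem_insert_of_mem (hA hf))
        have g2 := hr.mono (Finset.singleton_subset_iff.2 hf)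
        have g3 := hr.mono (Finset.insert_subset_insert e hA)
        have g4 := hr.mono (Finset.subset_insert e A)
        rw [if_pos (by omega)]
    rw [this, hE1]
    exact ⟨NN_one, by simp, by simp [bd, NN_zero]⟩
  have hED := hc.rk_erase hr heD h2
  have hdc := pp_del_con hr heD he hED
  by_cases hcon : Conn D (con r {e})
  · obtain ⟨P, hP, hPg⟩ := ih D.card (by omega) D (con r {e}) rfl (hr.con_isRk _) hcon
      (by rw [con_singleton he]; omega)
    rw [con_singleton he] at hPg
    by_cases hdel : Conn D r
    · obtain ⟨Q, hQ, hQg⟩ := ih D.card (by omega) D r rfl hr hdel (by omega)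
      refine ⟨Q + P, by rw [hdc, hP, hQ]; ring, ?_⟩
      rw [← hED, show r (insert e D) - 1 = (r (insert e D) - 1 - 1) + 1 by omega] at hQg
      rw [show r (insert e D) - 1 = (r (insert e D) - 1 - 1) + 1 by omega]
      exact hQg.add hPg
    · -- `M \ e` splits as `A ⊕ B`, so `M` is a series connection of `M / B` and `M / A`
      simp only [Conn, not_forall, not_not] at hdel
      obtain ⟨A, B, rfl, hd, hA, hB, hsep⟩ := hdel
      have heA : e ∉ A := fun h => heD (Finset.mem_union_left _ h)
      have heB : e ∉ B := fun h => heD (Finset.mem_union_right _ h)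
      have part : ∀ A B : Finset α, e ∉ A → Disjoint A B → A.Nonempty → B.Nonempty →
          r A + r B = r (A ∪ B) → Conn (insert e (A ∪ B)) r →
          r (insert e (A ∪ B)) = r (A ∪ B) → (A ∪ B).card + 1 = n →
          1 ≤ r A ∧ Good (r A - 1) (qq A e (con r B)) ∧ ∃ R, pp A r = X * R ∧ NN R ∧
            NN (qq A e (con r B) - R) := by
        intro A B heA hd hA hB hsep hc hED hn
        have hrB := hr.con_isRk B
        have hcA := hc.series_part hr hd hsep
        have hrk : con r B (insert e A) = r A := by
          rw [con, Finset.union_insert, Finset.union_comm, hED, ← hsep]; omega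
        have hrkA : con r B A = r A := by
          rw [con, Finset.union_comm, ← hsep]; omega
        have hE : 1 ≤ r (insert e (A ∪ B)) :=
          he ▸ hr.mono (by simp)
        obtain ⟨f, hf⟩ := hA
        have hA1 : 1 ≤ r A := by
          have g1 := hc.rk_singleton hr hE
            (Finset.mem_insert_of_mem (Finset.mem_union_left B hf))
          rw [← g1]
          exact hr.mono (Finset.singleton_subset_iff.2 hf)
        have hcard : A.card + 1 < n := by
          rw [← hn, Finset.card_union_of_disjoint hd]
          have := hB.card_pos
          omega
        obtain ⟨q, hq, hqg⟩ := ih _ hcard (insert e A) (con r B)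
          (Finset.card_insert_of_notMem heA) hrB hcA (by omega)
        rw [hrk, X_mul_inj (hq.symm.trans (pp_eq_X_mul_qq hrB heA))] at hqg
        refine ⟨hA1, hqg, ?_⟩
        -- the restriction to `A` agrees with the deletion of `e` from the contraction by `B`
        have hpA : pp A (con r B) = pp A r := by
          refine Finset.sum_congr rfl fun Y hY => ?_
          rw [Finset.mem_powerset] at hY
          have s := hr.sep_split hd hsep hY subset_rfl
          have : con r B Y = r Y := by
            rw [con, Finset.union_comm, s]; omega
          rw [hrkA, this]
        have he' := hcA.rk_singleton hrB (by omega) (Finset.mem_insert_self e A)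
        have hdcA := pp_del_con hrB heA he' (by rw [hrk, hrkA])
        rw [hpA, pp_eq_X_mul_qq hrB heA] at hdcA
        obtain ⟨A', hfA', rfl⟩ : ∃ A', f ∉ A' ∧ insert f A' = A :=
          ⟨A.erase f, by simp, Finset.insert_erase hf⟩
        have hR := pp_eq_X_mul_qq hr hfA'
        refine ⟨_, hR, NN.of_X_mul (hR ▸ NN_pp _ hr), NN.of_X_mul ?_⟩
        rw [mul_sub, hdcA, ← hR, add_sub_cancel_left]
        exact NN_pp _ (hrB.con_isRk _)
      obtain ⟨hA1, hgA, RA, hRA, hRAn, hRAq⟩ := part A B heA hd hA hB hsep hc hED hn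
      obtain ⟨hB1, hgB, RB, hRB, hRBn, hRBq⟩ := part B A heB hd.symm hB hA
        (by rw [add_comm, hsep, Finset.union_comm]) (by rwa [Finset.union_comm])
        (by rwa [Finset.union_comm]) (by rwa [Finset.union_comm])
      have hpD := pp_sep hr hd hsep
      rw [hpD, hP, hRA, hRB, hpq] at hdc
      have hqP : qq (A ∪ B) e r = X * (RA * RB) + P := X_mul_inj (by rw [hdc]; ring)
      refine ⟨_, hpq, ?_⟩
      have hβ := qq_series_coeff_zero hr hd hA hB hsep hED
      have hg := hgA.mul hgB
      rw [show r A - 1 + (r B - 1) = r (insert e (A ∪ B)) - 1 - 1 by omega] at hg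
      rw [hqP, show r (insert e (A ∪ B)) - 1 = r (insert e (A ∪ B)) - 1 - 1 + 1 by omega]
      refine hPg.series hg ?_ (NN_X.mul (hRAn.mul hRBn)) ?_ (by simp)
      · rw [mul_coeff_zero, ← hβ, hqP]
        simp
      · rw [← mul_sub]
        exact NN_X.mul (hRAn.mul_sub_mul hgB.nn hRAq hRBq)
  · -- `M / e` splits, so `M` is a parallel connection of `M | (A ∪ e)` and `M | (B ∪ e)`
    simp only [Conn, not_forall, not_not] at hcon
    obtain ⟨A, B, rfl, hd, hA, hB, hsep⟩ := hcon
    have heA : e ∉ A := fun h => heD (Finset.mem_union_left _ h)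
    have heB : e ∉ B := fun h => heD (Finset.mem_union_right _ h)
    simp only [con_singleton he] at hsep
    have a1 := hr.one_le_insert he A
    have a2 := hr.one_le_insert he B
    have h : r (insert e A) + r (insert e B) = r (insert e (A ∪ B)) + 1 := by omega
    have hcA := hc.parallel_part hr heB hd he h
    have hcB := Conn.parallel_part hr heA hd.symm he
      (by rw [add_comm, h, Finset.union_comm]) (by rwa [Finset.union_comm])
    rw [Finset.card_union_of_disjoint hd] at hn
    have := hA.card_pos
    have := hB.card_pos
    obtain ⟨q₁, hq₁, hg₁⟩ := ih (A.card + 1) (by omega) (insert e A) r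
      (Finset.card_insert_of_notMem heA) hr hcA a1
    obtain ⟨q₂, hq₂, hg₂⟩ := ih (B.card + 1) (by omega) (insert e B) r
      (Finset.card_insert_of_notMem heB) hr hcB a2
    rw [X_mul_inj (hq₁.symm.trans (pp_eq_X_mul_qq hr heA))] at hg₁
    rw [X_mul_inj (hq₂.symm.trans (pp_eq_X_mul_qq hr heB))] at hg₂
    refine ⟨_, hpq, ?_⟩
    rw [qq_parallel hr hd he h,
      show r (insert e (A ∪ B)) - 1 = (r (insert e A) - 1) + (r (insert e B) - 1) by omega]
    exact hg₁.mul hg₂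

end RankFunctions

/-! ### Rank functions of matroids -/

section Bridge

variable [Fintype α]

lemma mr_eq_eRk (M : Matroid α) (A : Set α) : (mr M A : ℕ∞) = M.eRk A := by
  obtain ⟨I, hI⟩ := M.exists_isBasis' A
  have hfin : I.Finite := Set.toFinite I
  have : mr M A = I.ncard := by
    refine IsGreatest.csSup_eq ⟨⟨I, hI.indep, hI.subset, rfl⟩, ?_⟩
    rintro n ⟨J, hJ, hJA, rfl⟩
    have h1 := hJ.encard_le_eRk_of_subset hJA
    rw [← hI.encard_eq_eRk, ← hfin.cast_ncard_eq, ← (Set.toFinite J).cast_ncard_eq] at h1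
    exact_mod_cast h1
  rw [this, hfin.cast_ncard_eq, hI.encard_eq_eRk]

lemma mr_isRk [DecidableEq α] (M : Matroid α) : IsRk (fun A : Finset α => mr M (A : Set α)) where
  empty := by
    have := mr_eq_eRk M ∅
    simpa using this
  mono {A B} h := by
    have := M.eRk_mono (Finset.coe_subset.2 h)
    rw [← mr_eq_eRk, ← mr_eq_eRk] at this
    exact_mod_cast this
  insert_le e A := by
    have := M.eRk_insert_le_add_one e (A : Set α)
    rw [← mr_eq_eRk, ← mr_eq_eRk] at this
    rw [Finset.coe_insert]
    exact_mod_cast this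
  submod A B := by
    have := M.eRk_inter_add_eRk_union_le (A : Set α) (B : Set α)
    simp only [← mr_eq_eRk] at this
    rw [Finset.coe_union, Finset.coe_inter, add_comm]
    exact_mod_cast this

lemma mr_le_card (M : Matroid α) (A : Finset α) : mr M (A : Set α) ≤ A.card := by
  have := M.eRk_le_encard (A : Set α)
  rw [← mr_eq_eRk, Set.encard_coe_eq_coe_finsetCard] at this
  exact_mod_cast this

lemma bpoly_eq_pp [DecidableEq α] (M : Matroid α) :
    bpoly M = pp Finset.univ (fun A : Finset α => mr M (A : Set α)) := by
  unfold bpoly pp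
  rw [Finset.powerset_univ]
  refine Finset.sum_congr rfl fun A _ => ?_
  obtain ⟨k, hk⟩ := Nat.exists_eq_add_of_le (mr_le_card M A)
  simp only [Finset.coe_univ]
  rw [hk, Nat.add_sub_cancel_left]
  have : ((-1 : ℤ[X]) ^ (mr M (A : Set α) + k + mr M (A : Set α))) = (-1) ^ k := by
    rw [show mr M (A : Set α) + k + mr M (A : Set α) = 2 * mr M (A : Set α) + k by ring, pow_add,
      pow_mul]
    simp
  rw [this]
  simp

end Bridge

/-- if `M` is a connected loopless matroid of rank `r ≥ 2`, and
`b_i(M)` is the coefficient of `x^i` in `T(M;x,0)`, then for `1 ≤ i ≤ r`,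
`b_i(M) ≤ C(r-2, i-1)·b_1(M) + C(r-2, i-2)`. -/
theorem stmt12 [Fintype α] [DecidableEq α] (M : Matroid α) (hE : M.E = Set.univ)
    (r : ℕ) (hr : mr M Set.univ = r) (hr2 : 2 ≤ r) (hconn : mConnected M)
    (hloop : ∀ e, ¬ mLoop M e) :
    ∀ i, 1 ≤ i → i ≤ r →
      (bpoly M).coeff i ≤
        ch ((r : ℤ) - 2) ((i : ℤ) - 1) * (bpoly M).coeff 1 +
          ch ((r : ℤ) - 2) ((i : ℤ) - 2) := by
  intro i hi hir
  have hru : mr M ((Finset.univ : Finset α) : Set α) = r := by rw [Finset.coe_univ, hr]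
  have hc : Conn Finset.univ (fun A : Finset α => mr M (A : Set α)) := by
    intro A B hAB hd hA hB
    have hBA : M.E \ (A : Set α) = B := by
      rw [hE, ← Set.compl_eq_univ_sdiff, ← Finset.coe_compl, Finset.coe_inj]
      exact (IsCompl.of_eq (Finset.disjoint_iff_inter_eq_empty.1 hd) hAB).compl_eq
    have := hconn.2 A (by simp [hE]) (by simpa using hA) (by rw [hBA]; simpa using hB)
    rw [hBA, hE] at this
    simpa using this
  obtain ⟨q, hq, hg⟩ := main_bound _ Finset.univ _ rfl (mr_isRk M) hc (by simp only [hru]; omega)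
  rw [bpoly_eq_pp, hq]
  obtain ⟨k, rfl⟩ := Nat.exists_eq_add_of_le' hr2
  obtain ⟨j, rfl⟩ := Nat.exists_eq_add_of_le' hi
  have h := hg.le j
  simp only [hru, show k + 2 - 1 = k + 1 by omega, bd] at h
  have hX : (X * q).coeff 1 = q.coeff 0 := coeff_X_mul q 0
  rw [hX, coeff_X_mul]
  have c1 : ∀ m : ℕ, ch (((k + 2 : ℕ) : ℤ) - 2) (m : ℤ) = k.choose m := by
    intro m
    unfold ch
    rw [show ((k + 2 : ℕ) : ℤ) - 2 = k by push_cast; ring]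
    split_ifs with hh
    · simp
    · rw [Nat.choose_eq_zero_of_lt (by omega)]
      simp
  rw [show ((j + 1 : ℕ) : ℤ) - 1 = (j : ℕ) by push_cast; ring, c1]
  rw [coeff_sub, mul_add, coeff_add, coeff_mul_C, coeff_one_add_X_pow] at h
  rcases j with _ | j
  · simp only [coeff_mul_X_zero] at h
    have : ch (((k + 2 : ℕ) : ℤ) - 2) (((0 + 1 : ℕ) : ℤ) - 2) = 0 := by
      unfold ch
      rw [if_neg]
      simp
    rw [this]
    linarith
  · rw [coeff_mul_X, coeff_one_add_X_pow] at h
    rw [show ((j + 1 + 1 : ℕ) : ℤ) - 2 = (j : ℕ) by push_cast; ring, c1]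
    linarith
end

section
/- Let M be a rank r ≥ 2 matroid without coloops on n elements, with h_i(M) the h-vector of its independence complex. Then h_{r-i}(M) ≤ C(r-1, i)·h_r(M) + C(r-1, i-1) for all 0 ≤ i ≤ r. -/
/-!
Write `P(M) = T(M; x, 1) = ∑_I (x - 1)^(r - |I|)`, the sum being over the independent sets of `M`.
Its coefficient at `x ^ i` is `h_{r - i}(M)` (`mh_eq_coeff`), so the claim is the coefficientwise
inequality `P(M) ≤ (1 + x)^(r - 1) (P(M)(0) + x)` for coloopless `M`. It is proved directly by
deletion-contraction: `P(M) = P(M ＼ e) + P(M ／ e)` when `e` is neither a loop nor a coloop, and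
`P(M) = x P(M ／ e)` for a coloop `e`.

Contraction keeps a matroid coloopless, but deletion may create coloops, so the induction
(`indepPoly_le`) is run for all matroids, with the constant coefficient replaced by the trailing
coefficient `c(M)` of `P(M)`. Let `M` be coloopless of rank `r ≥ 2` and `e` a nonloop.
* If `M ＼ e` is coloopless, then `c(M) = c(M ＼ e) + c(M ／ e)` with `c(M ／ e) ≥ 1`, and the two
  inductive bounds add up, because `c + x ≤ (1 + x) c` for `c ≥ 1`.
* If `M ＼ e` has a coloop `f`, then `P(M ＼ e) = x P(M ＼ e ／ f)` and `c(M) = c(M ／ e)`. The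
  inductive bounds for `M ＼ e ／ f` and `M ／ e`, both of rank `r - 1`, add up, given that
  `c(M ＼ e) ≤ c(M)` (`trailingCoeff_delete_le`).
-/

open Polynomial

variable {α : Type*}

open scoped Matroid

/-! ### Coefficientwise order on integer polynomials -/

/-- Coefficientwise nonnegativity of an integer polynomial; `p ≤ q` coefficientwise is encoded
as `NonnegCoeffs (q - p)`. -/
def NonnegCoeffs (p : ℤ[X]) : Prop := ∀ i, 0 ≤ p.coeff i

namespace NonnegCoeffs

lemma add {p q : ℤ[X]} (hp : NonnegCoeffs p) (hq : NonnegCoeffs q) : NonnegCoeffs (p + q) := by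
  intro i
  rw [coeff_add]
  exact add_nonneg (hp i) (hq i)

lemma mul {p q : ℤ[X]} (hp : NonnegCoeffs p) (hq : NonnegCoeffs q) : NonnegCoeffs (p * q) := by
  intro i
  rw [coeff_mul]
  exact Finset.sum_nonneg fun x _ => mul_nonneg (hp _) (hq _)

lemma X : NonnegCoeffs X := by
  intro i
  rw [coeff_X]
  split_ifs <;> simp

lemma C {a : ℤ} (ha : 0 ≤ a) : NonnegCoeffs (C a) := by
  intro i
  rw [coeff_C]
  split_ifs <;> simp [ha]

lemma one : NonnegCoeffs 1 := by
  simpa using C zero_le_one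

lemma zero : NonnegCoeffs 0 := by
  intro i
  simp

lemma pow (s : ℕ) : NonnegCoeffs ((1 + Polynomial.X) ^ s) := by
  intro i
  rw [coeff_one_add_X_pow]
  positivity

lemma trailingCoeff_nonneg {p : ℤ[X]} (hp : NonnegCoeffs p) : 0 ≤ p.trailingCoeff := hp _

end NonnegCoeffs

lemma trailingCoeff_X_mul (p : ℤ[X]) : (X * p).trailingCoeff = p.trailingCoeff := by
  rw [trailingCoeff_mul]
  have : (X : ℤ[X]).trailingCoeff = 1 := by simp [trailingCoeff]
  rw [this, one_mul]

/-! ### Rank under deletion and contraction -/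

lemma mr_ground_eq [Fintype α] {M : Matroid α} {B : Set α} (hB : M.IsBase B) :
    mr M M.E = B.ncard := by
  refine IsGreatest.csSup_eq ⟨⟨B, hB.indep, hB.subset_ground, rfl⟩, ?_⟩
  rintro n ⟨I, hI, -, rfl⟩
  obtain ⟨B', hB', hIB'⟩ := hI.exists_isBase_superset
  rw [hB.ncard_eq_ncard_of_isBase hB']
  exact Set.ncard_le_ncard hIB' (Set.toFinite _)

lemma ncard_le_mr_ground [Fintype α] {M : Matroid α} {I : Set α} (hI : M.Indep I) :
    I.ncard ≤ mr M M.E := by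
  obtain ⟨B, hB, hIB⟩ := hI.exists_isBase_superset
  rw [mr_ground_eq hB]
  exact Set.ncard_le_ncard hIB (Set.toFinite _)

lemma mr_contract [Fintype α] {M : Matroid α} {e : α} (he : M.IsNonloop e) :
    mr M M.E = mr (M ／ {e}) (M ／ {e}).E + 1 := by
  obtain ⟨B, hB⟩ := (M ／ {e}).exists_isBase
  have hB' := hB
  rw [he.indep.contract_isBase_iff] at hB'
  have hd : e ∉ B := fun h => Set.disjoint_left.1 hB'.2 h rfl
  rw [mr_ground_eq hB, mr_ground_eq hB'.1, Set.union_singleton, Set.ncard_insert_of_notMem hd]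

lemma mr_delete [Fintype α] {M : Matroid α} {e : α} (he : ¬ M.IsColoop e) :
    mr M M.E = mr (M ＼ {e}) (M ＼ {e}).E := by
  rw [Matroid.isColoop_iff_forall_mem_isBase] at he
  push Not at he
  obtain ⟨B, hB, heB⟩ := he
  have hB' : (M ＼ {e}).IsBase B := by
    rw [Matroid.delete_isBase_iff]
    refine hB.isBasis_ground.isBasis_subset ?_ Set.sdiff_subset
    exact Set.subset_sdiff_singleton hB.subset_ground heB
  rw [mr_ground_eq hB, mr_ground_eq hB']

/-! ### Deletion-contraction for `T(M; x, 1)` -/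

open Classical in
/-- The polynomial `T(M; x, 1) = ∑_I (x - 1)^(r(M) - |I|)`, summed over the independent sets `I`
of `M`. Its coefficient at `x ^ i` is `h_{r - i}(M)`. -/
noncomputable def indepPoly [Fintype α] (M : Matroid α) : ℤ[X] :=
  ∑ I : Set α with M.Indep I, (X - 1) ^ (mr M M.E - I.ncard)

open Classical in
/-- The independent sets containing a nonloop `e` contribute `T(M ／ e; x, 1)`. -/
lemma indepPoly_split [Fintype α] {M : Matroid α} {e : α} (he : M.IsNonloop e) :
    indepPoly M = (∑ I : Set α with M.Indep I ∧ e ∉ I, (X - 1) ^ (mr M M.E - I.ncard)) +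
      indepPoly (M ／ {e}) := by
  have h2 : (∑ I : Set α with M.Indep I ∧ ¬ e ∉ I, (X - 1 : ℤ[X]) ^ (mr M M.E - I.ncard)) =
      indepPoly (M ／ {e}) := by
    rw [indepPoly]
    refine Finset.sum_bij' (fun I _ => I \ {e}) (fun I _ => insert e I) ?_ ?_ ?_ ?_ ?_
    · intro I hI
      simp only [Finset.mem_filter, Finset.mem_univ, true_and, not_not] at hI ⊢
      rw [he.contractElem_indep_iff]
      simp [Set.insert_eq_of_mem hI.2, hI.1]
    · intro I hI
      simp only [Finset.mem_filter, Finset.mem_univ, true_and, not_not] at hI ⊢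
      rw [he.contractElem_indep_iff] at hI
      exact ⟨hI.2, Set.mem_insert _ _⟩
    · intro I hI
      simp only [Finset.mem_filter, Finset.mem_univ, true_and, not_not] at hI
      simp [Set.insert_eq_of_mem hI.2]
    · intro I hI
      simp only [Finset.mem_filter, Finset.mem_univ, true_and] at hI
      rw [he.contractElem_indep_iff] at hI
      simp [hI.1]
    · intro I hI
      simp only [Finset.mem_filter, Finset.mem_univ, true_and, not_not] at hI
      have h1 := Set.ncard_sdiff_singleton_add_one hI.2 (Set.toFinite _)
      rw [mr_contract he, ← h1, Nat.add_sub_add_right]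
  rw [← h2, ← Finset.filter_filter, ← Finset.filter_filter,
    Finset.sum_filter_add_sum_filter_not, indepPoly]

lemma indepPoly_coloop [Fintype α] {M : Matroid α} {e : α} (he : M.IsColoop e) :
    indepPoly M = X * indepPoly (M ／ {e}) := by
  classical
  -- `M ／ {e} = M ＼ {e}` for a coloop `e`, and its rank is one less than that of `M`.
  have h1 : (∑ I : Set α with M.Indep I ∧ e ∉ I, (X - 1 : ℤ[X]) ^ (mr M M.E - I.ncard)) =
      (X - 1) * indepPoly (M ／ {e}) := by
    rw [indepPoly, Finset.mul_sum]
    refine Finset.sum_congr ?_ ?_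
    · ext I
      simp only [Finset.mem_filter, Finset.mem_univ, true_and]
      rw [Matroid.contract_eq_delete_of_subset_coloops (Set.singleton_subset_iff.2 he),
        Matroid.deleteElem_indep_iff]
    · intro I hI
      simp only [Finset.mem_filter, Finset.mem_univ, true_and] at hI
      rw [mr_contract he.isNonloop, ← pow_succ',
        Nat.sub_add_comm (ncard_le_mr_ground hI)]
  rw [indepPoly_split he.isNonloop, h1]
  ring

lemma indepPoly_eq_add [Fintype α] {M : Matroid α} {e : α} (he : M.IsNonloop e)
    (hc : ¬ M.IsColoop e) : indepPoly M = indepPoly (M ＼ {e}) + indepPoly (M ／ {e}) := by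
  classical
  rw [indepPoly_split he]
  congr 1
  rw [indepPoly, ← mr_delete hc]
  simp only [Matroid.deleteElem_indep_iff]

lemma indepPoly_loop [Fintype α] {M : Matroid α} {e : α} (he : M.IsLoop e) :
    indepPoly M = indepPoly (M ＼ {e}) := by
  classical
  rw [indepPoly, indepPoly, ← mr_delete he.not_isColoop]
  refine Finset.sum_congr ?_ fun _ _ => rfl
  ext I
  simp only [Finset.mem_filter, Finset.mem_univ, true_and, Matroid.deleteElem_indep_iff]
  exact ⟨fun h => ⟨h, fun heI => he.not_indep_of_mem heI h⟩, fun h => h.1⟩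

lemma indepPoly_rank_zero [Fintype α] {M : Matroid α} (h : mr M M.E = 0) : indepPoly M = 1 := by
  classical
  have : (Finset.univ.filter fun I : Set α => M.Indep I) = {∅} := by
    ext I
    simp only [Finset.mem_filter, Finset.mem_univ, true_and, Finset.mem_singleton]
    refine ⟨fun hI => ?_, fun hI => hI ▸ M.empty_indep⟩
    have := ncard_le_mr_ground hI
    rw [h, Nat.le_zero, Set.ncard_eq_zero (Set.toFinite _)] at this
    exact this
  rw [indepPoly, this, Finset.sum_singleton, h]
  simp

lemma exists_isNonloop [Fintype α] {M : Matroid α} (h : mr M M.E ≠ 0) : ∃ e, M.IsNonloop e := by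
  obtain ⟨B, hB⟩ := M.exists_isBase
  rw [mr_ground_eq hB] at h
  obtain ⟨e, he⟩ := Set.nonempty_of_ncard_ne_zero h
  exact ⟨e, hB.indep.isNonloop_of_mem he⟩

/-! ### The trailing coefficient -/

/-- Induction on the size of the ground set. -/
lemma matroid_induction {P : Matroid α → Prop}
    (h : ∀ M : Matroid α, (∀ N : Matroid α, N.E.ncard < M.E.ncard → P N) → P M)
    (M : Matroid α) : P M := by
  induction hn : M.E.ncard using Nat.strong_induction_on generalizing M with
  | _ n ih => exact h M fun N hN => ih _ (hn ▸ hN) N rfl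

lemma ncard_diff_lt [Fintype α] {M : Matroid α} {e : α} (he : e ∈ M.E) :
    (M.E \ {e}).ncard < M.E.ncard :=
  Set.ncard_sdiff_singleton_lt_of_mem he (Set.toFinite _)

lemma indepPoly_nonneg [Fintype α] (M : Matroid α) : NonnegCoeffs (indepPoly M) := by
  induction M using matroid_induction with
  | h M ih =>
    by_cases h0 : mr M M.E = 0
    · rw [indepPoly_rank_zero h0]
      exact .one
    · obtain ⟨e, he⟩ := exists_isNonloop h0
      by_cases hcl : M.IsColoop e
      · rw [indepPoly_coloop hcl]
        exact .mul .X (ih (M ／ {e}) (ncard_diff_lt he.mem_ground))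
      · rw [indepPoly_eq_add he hcl]
        exact (ih (M ＼ {e}) (ncard_diff_lt he.mem_ground)).add (ih (M ／ {e}) (ncard_diff_lt he.mem_ground))

lemma not_isColoop_contract {M : Matroid α} (hM : ∀ f, ¬ M.IsColoop f) (e f : α) :
    ¬ (M ／ {e}).IsColoop f := by
  rw [Matroid.contract_isColoop_iff]
  exact fun h => hM f h.1

/-- `T(M; 0, 1) > 0` when `M` has no coloops. -/
lemma coeff_zero_pos [Fintype α] (M : Matroid α) (hM : ∀ f, ¬ M.IsColoop f) :
    0 < (indepPoly M).coeff 0 := by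
  induction M using matroid_induction with
  | h M ih =>
    by_cases h0 : mr M M.E = 0
    · simp [indepPoly_rank_zero h0]
    · obtain ⟨e, he⟩ := exists_isNonloop h0
      rw [indepPoly_eq_add he (hM e), coeff_add]
      exact add_pos_of_nonneg_of_pos (indepPoly_nonneg _ 0)
        (ih (M ／ {e}) (ncard_diff_lt he.mem_ground) (not_isColoop_contract hM e))

lemma trailingCoeff_eq [Fintype α] {M : Matroid α} (hM : ∀ f, ¬ M.IsColoop f) :
    (indepPoly M).trailingCoeff = (indepPoly M).coeff 0 :=
  trailingCoeff_eq_coeff_zero (coeff_zero_pos M hM).ne'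

/-- Deleting an element of a coloopless matroid cannot increase the trailing coefficient. If the
deletion of `e` creates a coloop `f`, that coloop only contributes a factor `x`, so it may be
contracted first; this reduces the claim to the coloopless matroid `M ／ {f}`. -/
lemma trailingCoeff_delete_le [Fintype α] (M : Matroid α) (hM : ∀ f, ¬ M.IsColoop f) :
    ∀ e ∈ M.E, (indepPoly (M ＼ {e})).trailingCoeff ≤ (indepPoly M).coeff 0 := by
  induction M using matroid_induction with
  | h M ih =>
    intro e heE
    rcases M.isLoop_or_isNonloop e heE with he | he
    · rw [← indepPoly_loop he, trailingCoeff_eq hM]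
    by_cases hd : ∀ f, ¬ (M ＼ {e}).IsColoop f
    · rw [trailingCoeff_eq hd, indepPoly_eq_add he (hM e), coeff_add]
      exact le_add_of_nonneg_right (indepPoly_nonneg _ 0)
    · push Not at hd
      obtain ⟨f, hf⟩ := hd
      have hfM : M.IsNonloop f := hf.isNonloop.of_delete
      have hfe : f ≠ e := by
        have := hf.mem_ground
        simpa using this.2
      rw [indepPoly_coloop hf, trailingCoeff_X_mul,
        ← Matroid.contract_delete_comm _ (by simpa using hfe)]
      refine (ih (M ／ {f}) (ncard_diff_lt hfM.mem_ground) (not_isColoop_contract hM f) e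
        ⟨heE, by simpa using hfe.symm⟩).trans ?_
      rw [indepPoly_eq_add hfM (hM f), coeff_add]
      exact le_add_of_nonneg_left (indepPoly_nonneg _ 0)

/-! ### The coefficientwise bound -/

/-- The coefficientwise bound `T(M; x, 1) ≤ (1 + x)^(r - 1) (c + x)` for every matroid of rank
`r ≥ 1`, where `c` is the trailing coefficient of `T(M; x, 1)`. Taking the trailing coefficient
instead of the constant one makes the bound meaningful in the presence of coloops, which appear
under deletion. -/
lemma indepPoly_le [Fintype α] (M : Matroid α) : ∀ s, mr M M.E = s + 1 →
    NonnegCoeffs ((1 + X) ^ s * (C (indepPoly M).trailingCoeff + X) - indepPoly M) := by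
  induction M using matroid_induction with
  | h M ih =>
    intro s hs
    by_cases hcl : ∃ e, M.IsColoop e
    · obtain ⟨e, he⟩ := hcl
      have hrk : mr (M ／ {e}) (M ／ {e}).E = s := by
        have := mr_contract he.isNonloop
        omega
      rw [indepPoly_coloop he, trailingCoeff_X_mul]
      rcases s with _ | s
      · rw [indepPoly_rank_zero hrk]
        convert NonnegCoeffs.one using 1
        rw [trailingCoeff_eq_coeff_zero (by simp)]
        simp
      · have h1 := ih (M ／ {e}) (ncard_diff_lt he.mem_ground) s hrk
        have h2 := (indepPoly_nonneg (M ／ {e})).trailingCoeff_nonneg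
        convert (NonnegCoeffs.X.mul h1).add ((NonnegCoeffs.pow s).mul ((NonnegCoeffs.C h2).add .X))
          using 1
        ring
    · push Not at hcl
      obtain ⟨e, he⟩ := exists_isNonloop (M := M) (by omega)
      have hrk : mr (M ／ {e}) (M ／ {e}).E = s := by
        have := mr_contract he
        omega
      have hrkd := (mr_delete (hcl e)).symm.trans hs
      have hadd := indepPoly_eq_add he (hcl e)
      have hc0 : (indepPoly M).coeff 0 =
          (indepPoly (M ＼ {e})).coeff 0 + (indepPoly (M ／ {e})).coeff 0 := by
        rw [hadd, coeff_add]
      have hcc := not_isColoop_contract hcl e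
      rw [trailingCoeff_eq hcl]
      by_cases hdcl : ∀ f, ¬ (M ＼ {e}).IsColoop f
      · have h1 := ih (M ＼ {e}) (ncard_diff_lt he.mem_ground) s hrkd
        rw [trailingCoeff_eq hdcl] at h1
        rw [hc0, hadd]
        rcases s with _ | s
        · rw [indepPoly_rank_zero hrk]
          convert h1 using 1
          simp
          ring
        · have h2 := ih (M ／ {e}) (ncard_diff_lt he.mem_ground) s hrk
          rw [trailingCoeff_eq hcc] at h2
          have h3 : 0 ≤ (indepPoly (M ／ {e})).coeff 0 - 1 := by
            have := coeff_zero_pos _ hcc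
            omega
          convert (h1.add h2).add ((NonnegCoeffs.pow s).mul (NonnegCoeffs.X.mul (.C h3))) using 1
          simp only [map_add, map_sub, map_one]
          ring
      · push Not at hdcl
        obtain ⟨f, hf⟩ := hdcl
        have hle := trailingCoeff_delete_le M hcl e he.mem_ground
        have hP := indepPoly_coloop hf
        have hrkf : mr ((M ＼ {e}) ／ {f}) ((M ＼ {e}) ／ {f}).E = s := by
          have := mr_contract hf.isNonloop
          omega
        rcases s with _ | s
        -- In rank one, `P(M ＼ e) = x` and `P(M ／ e) = 1`, so equality holds.
        · rw [hc0, hadd, hP, indepPoly_rank_zero hrk, indepPoly_rank_zero hrkf]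
          convert NonnegCoeffs.zero using 1
          simp
          ring
        · have h1 := ih ((M ＼ {e}) ／ {f}) ((ncard_diff_lt hf.mem_ground).trans
            (ncard_diff_lt he.mem_ground)) s hrkf
          have h2 := ih (M ／ {e}) (ncard_diff_lt he.mem_ground) s hrk
          rw [hP, trailingCoeff_X_mul] at hle
          have h0 : (indepPoly (M ＼ {e})).coeff 0 = 0 := by rw [hP]; simp
          rw [h0, zero_add] at hc0
          rw [trailingCoeff_eq hcc, ← hc0] at h2
          have h3 := sub_nonneg.2 hle
          convert ((NonnegCoeffs.X.mul h1).add h2).add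
            (NonnegCoeffs.X.mul ((NonnegCoeffs.pow s).mul (.C h3))) using 1
          rw [hadd, hP, map_sub]
          ring

/-! ### Translation to `h`-numbers -/

lemma coeff_X_sub_one_pow (n i : ℕ) :
    ((X - 1 : ℤ[X]) ^ n).coeff i = (-1) ^ (n - i) * (n.choose i : ℤ) := by
  have h := coeff_X_add_C_pow (-1 : ℤ) n i
  rwa [map_neg, map_one, ← sub_eq_add_neg] at h

/-- `h_{r - i}(M)` is the coefficient of `T(M; x, 1)` at `x ^ i`. -/
lemma mh_eq_coeff [Fintype α] (M : Matroid α) {r : ℕ} (hr : mr M M.E = r) {i : ℕ} (hi : i ≤ r) :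
    mh M r (r - i) = (indepPoly M).coeff i := by
  classical
  have hmf : ∀ j, (mf M j : ℤ) = ∑ I : Set α with M.Indep I, if I.ncard = j then 1 else 0 := by
    intro j
    rw [mf, Set.ncard_eq_toFinset_card', ← Finset.sum_filter, Finset.filter_filter]
    simp
  rw [indepPoly, finsetSum_coeff, mh]
  simp_rw [hmf, Finset.mul_sum]
  rw [Finset.sum_comm]
  refine Finset.sum_congr rfl fun I hI => ?_
  simp only [Finset.mem_filter, Finset.mem_univ, true_and] at hI
  have hle := ncard_le_mr_ground hI
  rw [coeff_X_sub_one_pow, hr]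
  simp only [mul_ite, mul_one, mul_zero, Finset.sum_ite_eq, Finset.mem_range]
  rw [Nat.sub_sub_self hi]
  split_ifs with h
  · rw [Nat.sub_right_comm]
  · rw [Nat.choose_eq_zero_of_lt (by omega)]
    simp

/-- The coefficients of the bounding polynomial, in terms of `ch`, whose zero conventions agree
with those of polynomial coefficients. -/
lemma coeff_bound (s i : ℕ) (c : ℤ) :
    ((1 + X : ℤ[X]) ^ s * (C c + X)).coeff i = ch s i * c + ch s ((i : ℤ) - 1) := by
  have h1 : ∀ j : ℕ, ((s.choose j : ℕ) : ℤ) = ch s j := by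
    intro j
    rw [ch]
    split_ifs with h
    · simp
    · rw [Nat.choose_eq_zero_of_lt (by omega)]
      simp
  rw [mul_add, coeff_add, coeff_mul_C, coeff_one_add_X_pow, h1]
  congr 1
  rcases i with _ | i
  · simp [ch]
  · rw [coeff_mul_X, coeff_one_add_X_pow, h1]
    simp

/-- if `M` is a rank `r ≥ 2` matroid without coloops, then
`h_{r-i}(M) ≤ C(r-1, i)·h_r(M) + C(r-1, i-1)` for `0 ≤ i ≤ r`. -/
theorem stmt14 [Fintype α] (M : Matroid α) (r : ℕ) (hr : mr M M.E = r) (hr2 : 2 ≤ r)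
    (hcl : ∀ e, ¬ mColoop M e) :
    ∀ i ≤ r,
      mh M r (r - i) ≤
        ch ((r : ℤ) - 1) (i : ℤ) * mh M r r + ch ((r : ℤ) - 1) ((i : ℤ) - 1) := by
  intro i hi
  have hM : ∀ f, ¬ M.IsColoop f := hcl
  obtain ⟨s, rfl⟩ : ∃ s, r = s + 1 := ⟨r - 1, by omega⟩
  have h := indepPoly_le M s hr i
  have h0 : mh M (s + 1) (s + 1) = (indepPoly M).coeff 0 := mh_eq_coeff M hr (Nat.zero_le _)
  rw [coeff_sub, coeff_bound, trailingCoeff_eq hM] at h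
  rw [mh_eq_coeff M hr hi, h0]
  push_cast
  rw [add_sub_cancel_right]
  linarith
end
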